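/- Assume the abc-conjecture. Let P ∈ ℤ[T] be a separable polynomial of degree N ≥ 5 with leading coefficient a_N, and let g = ⌊(N−1)/2⌋ be the genus of the hyperelliptic curve y² = P(t) (so g ≥ 2). Then for every ε > 0 and every sufficiently large x, the number of squarefree integers d ∉ {0,1} with |d| ≤ x such that the twisted hyperelliptic curve y² = d·P(t) has a non-trivial ℚ-rational point — i.e., either there exist t, y ∈ ℚ with y ≠ 0 and y² = d·P(t), or N is even and d·a_N is a nonzero square in ℚ — is at most x^{1/(g−1) + ε}. -/

import Mathlib

/-!
For `f ∈ ℚ[X]` with `r` distinct complex roots, consider the bound saying that the radical of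
`den t * num (f t)` is `≫ H(t) ^ (r - 1 - ε)` for `t ∈ ℚ`. The abc-conjecture is this bound for
`X * (X - 1)`. It holds for every nonzero `f`, by an argument of Elkies and Langevin. The bound
passes from `f` to the divisors of powers of `f`, and it pulls back from `f` to `f ∘ φ` whenever
the critical points of the polynomial `φ` are roots of `f ∘ φ`, because
`H(φ t) ≫ H(t) ^ deg φ` and, by Riemann–Hurwitz, `f ∘ φ` has at most `(r - 1) deg φ + 1` distinct
roots. Belyi's construction produces maps `φ` reducing an arbitrary `f` to `X * (X - 1)`.

If `y ^ 2 = d * P(t)` with `d` squarefree and `y ≠ 0`, let `W` be the value at `(num t, den t)` of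
the binary form of degree `2 * g + 2` attached to `P`. Then `W = d * w ^ 2`, so
`rad W ^ 2 ≤ |d * W| ≪ |d| * H(t) ^ (2 * g + 2)`, while `rad W ≫ H(t) ^ (2 * g - ε)` by the bound
for `P`. Hence `H(t) ^ (2 * (g - 1 - ε)) ≪ |d|`. Since `t` determines `d`, and `O(B ^ 2)` rational
numbers have height at most `B`, affine points account for `O(x ^ (1 / (g - 1 - ε)))` values of
`d`. Points at infinity account for at most one more.
-/

open Polynomial

/-- The radical of a natural number: the product of its distinct prime factors. -/
def radNat (m : ℕ) : ℕ := ∏ p ∈ m.primeFactors, p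

/-- The abc-conjecture. -/
def ABCConjecture : Prop :=
  ∀ ε : ℝ, 0 < ε → ∃ K : ℝ, 0 < K ∧
    ∀ a b c : ℕ, 0 < a → 0 < b → 0 < c → Nat.Coprime a b → a + b = c →
      (c : ℝ) ≤ K * (radNat (a * b * c) : ℝ) ^ ((1 : ℝ) + ε)

/-- `d` is a squarefree integer with `d ∉ {0,1}`. -/
def SqfInt (d : ℤ) : Prop :=
  d ≠ 0 ∧ d ≠ 1 ∧ ∀ p : ℕ, p.Prime → ¬ ((p : ℤ) ^ 2 ∣ d)

open Height UniqueFactorizationMonoid Asymptotics Filter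

section Height

variable {K : Type*} [Field K]

lemma exists_mul_add_eq_X_pow {f : K[X]} (hf : f.natDegree ≠ 0) :
    ∃ A B : K[X], A.natDegree ≤ f.natDegree ∧ B.natDegree ≤ f.natDegree ∧
      A * f + B = X ^ (f.natDegree + f.natDegree) := by
  have hf0 : f ≠ 0 := ne_zero_of_natDegree_gt (Nat.pos_of_ne_zero hf)
  refine ⟨X ^ (f.natDegree + f.natDegree) / f, X ^ (f.natDegree + f.natDegree) % f, ?_,
    (natDegree_mod_lt _ hf).le, by rw [mul_comm, EuclideanDomain.div_add_mod]⟩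
  rw [div_def]
  refine (natDegree_C_mul_le _ _).trans ?_
  rw [natDegree_divByMonic _ (monic_mul_leadingCoeff_inv hf0), natDegree_X_pow,
    natDegree_mul_leadingCoeff_inv _ hf0, Nat.add_sub_cancel]

lemma eval_toTupleMvPolynomial_cons_one (f : K[X]) (t : K) :
    (fun j ↦ (f.toTupleMvPolynomial j).eval ![t, 1]) = ![f.eval t, 1] := by
  ext j
  fin_cases j <;> simp [toTupleMvPolynomial, eval_homogenize]

variable [AdmissibleAbsValues K]

lemma exists_mulHeight₁_eval_le (f : K[X]) :
    ∃ C > 0, ∀ t : K, mulHeight₁ (f.eval t) ≤ C * mulHeight₁ t ^ f.natDegree := by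
  obtain ⟨C, hC, hle⟩ := mulHeight_eval_le' f.isHomogeneous_toTupleMvPolynomial
  refine ⟨C, hC, fun t ↦ ?_⟩
  simpa only [eval_toTupleMvPolynomial_cons_one, mulHeight₁_eq_mulHeight] using hle ![t, 1]

lemma exists_mul_mulHeight₁_pow_le (f : K[X]) :
    ∃ C > 0, ∀ t : K, C * mulHeight₁ t ^ f.natDegree ≤ mulHeight₁ (f.eval t) := by
  rcases eq_or_ne f.natDegree 0 with hf | hf
  · exact ⟨1, one_pos, fun t ↦ by simpa [hf] using one_le_mulHeight₁ _⟩
  obtain ⟨A, B, hA, hB, hAB⟩ := exists_mul_add_eq_X_pow hf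
  let q : Fin 2 × Fin 2 → MvPolynomial (Fin 2) K := fun a ↦
    !![A.homogenize f.natDegree, B.homogenize f.natDegree;
      0, MvPolynomial.X 1 ^ f.natDegree] a.1 a.2
  have hq : ∀ a, (q a).IsHomogeneous f.natDegree := by
    rintro ⟨i, j⟩
    fin_cases i <;> fin_cases j <;>
      simp [q, MvPolynomial.isHomogeneous_zero, MvPolynomial.isHomogeneous_X_pow]
  obtain ⟨C, hC, hle⟩ := mulHeight_eval_ge' (N := f.natDegree) hq
  refine ⟨C, hC, fun t ↦ ?_⟩
  have hrel : ∀ k, ∑ j, (q (k, j)).eval ![t, 1] * (f.toTupleMvPolynomial j).eval ![t, 1] =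
      ![t, 1] k ^ (f.natDegree + f.natDegree) := by
    have hABt : A.eval t * f.eval t + B.eval t = t ^ (f.natDegree + f.natDegree) := by
      simpa using congrArg (eval t) hAB
    intro k
    fin_cases k <;> simp [q, toTupleMvPolynomial, eval_homogenize, hA, hB, hABt]
  simpa only [eval_toTupleMvPolynomial_cons_one, mulHeight₁_eq_mulHeight] using hle _ hrel

lemma mulHeight₁_rpow_isBigO {a b : ℝ} (hab : a ≤ b) (l : Filter K) :
    (fun t ↦ mulHeight₁ t ^ a) =O[l] fun t ↦ mulHeight₁ t ^ b :=
  .of_bound' <| .of_forall fun t ↦ by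
    rw [Real.norm_of_nonneg (by positivity), Real.norm_of_nonneg (by positivity)]
    exact Real.rpow_le_rpow_of_exponent_le (one_le_mulHeight₁ t) hab

lemma natAbs_num_le_mulHeight₁ (t : ℚ) : (t.num.natAbs : ℝ) ≤ mulHeight₁ t := by
  rw [Rat.mulHeight₁_eq_max]
  exact mod_cast le_max_left _ _

lemma den_le_mulHeight₁ (t : ℚ) : (t.den : ℝ) ≤ mulHeight₁ t := by
  rw [Rat.mulHeight₁_eq_max]
  exact mod_cast le_max_right _ _

lemma ncard_mulHeight₁_le {B : ℝ} (hB : 0 ≤ B) :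
    ({t : ℚ | mulHeight₁ t ≤ B}.ncard : ℝ) ≤ 3 * B ^ 2 := by
  set n := ⌊B⌋₊
  have hmaps : Set.MapsTo (fun t : ℚ ↦ (t.num, t.den)) {t : ℚ | mulHeight₁ t ≤ B}
      (Finset.Icc (-n : ℤ) n ×ˢ Finset.Icc 1 n : Finset (ℤ × ℕ)) := by
    intro t ht
    have hnum : t.num.natAbs ≤ n := Nat.le_floor ((natAbs_num_le_mulHeight₁ t).trans ht)
    have hden : t.den ≤ n := Nat.le_floor ((den_le_mulHeight₁ t).trans ht)
    have hpos := t.den_pos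
    simp only [Finset.coe_product, Set.mem_prod, Finset.coe_Icc, Set.mem_Icc]
    omega
  have hinj : Set.InjOn (fun t : ℚ ↦ (t.num, t.den)) {t : ℚ | mulHeight₁ t ≤ B} :=
    fun s _ t _ h ↦ Rat.ext (congrArg Prod.fst h) (congrArg Prod.snd h)
  have hbox : (Finset.Icc (-n : ℤ) n ×ˢ Finset.Icc 1 n : Finset (ℤ × ℕ)).card ≤ 3 * n ^ 2 := by
    rw [Finset.card_product, Int.card_Icc, Nat.card_Icc, Nat.add_sub_cancel,
      show ((n : ℤ) + 1 - -n).toNat = 2 * n + 1 by omega]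
    nlinarith [Nat.le_self_pow two_ne_zero n]
  have hcard : {t : ℚ | mulHeight₁ t ≤ B}.ncard ≤ 3 * n ^ 2 := by
    grw [Set.ncard_le_ncard_of_injOn _ hmaps hinj (Finset.finite_toSet _), Set.ncard_coe_finset,
      hbox]
  calc ({t : ℚ | mulHeight₁ t ≤ B}.ncard : ℝ) ≤ 3 * (n : ℝ) ^ 2 := mod_cast hcard
    _ ≤ 3 * B ^ 2 := by grw [Nat.floor_le hB]

end Height

section Conductor

lemma radical_dvd_mul_radical {M : Type*} [CommMonoidWithZero M]
    [NormalizationMonoid M] [UniqueFactorizationMonoid M] [Nontrivial M] {a b c : M} {n : ℕ}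
    (hb : b ≠ 0) (hc : c ≠ 0) (h : a ∣ (b * c) ^ n) : radical a ∣ b * radical c :=
  calc radical a ∣ radical ((b * c) ^ n) :=
        radical_dvd_radical h (pow_ne_zero _ (mul_ne_zero hb hc))
    _ ∣ radical (b * c) := radical_pow_dvd
    _ ∣ radical b * radical c := radical_mul_dvd
    _ ∣ b * radical c := mul_dvd_mul_right radical_dvd_self _

lemma radical_isBigO_radical {ι : Type*} {l : Filter ι} {a c : ι → ℕ} {b n : ℕ} (hb : b ≠ 0)
    (hc : ∀ᶠ i in l, c i ≠ 0) (h : ∀ i, a i ∣ (b * c i) ^ n) :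
    (fun i ↦ ((radical (a i) : ℕ) : ℝ)) =O[l] fun i ↦ ((radical (c i) : ℕ) : ℝ) := by
  refine .of_bound b (hc.mono fun i hci ↦ ?_)
  have hdvd : radical (a i) ∣ b * radical (c i) := radical_dvd_mul_radical hb hci (h i)
  have hle := Nat.le_of_dvd (Nat.mul_pos (Nat.pos_of_ne_zero hb) (Nat.radical_pos _)) hdvd
  rw [Real.norm_natCast, Real.norm_natCast]
  exact mod_cast hle

lemma rat_num_dvd_num_mul_mul_den (a b : ℚ) : a.num ∣ (a * b).num * b.den := by
  have hcop : IsCoprime a.num (a.den : ℤ) := by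
    simpa [Int.isCoprime_iff_gcd_eq_one, Int.gcd] using a.reduced
  refine hcop.dvd_of_dvd_mul_right ?_
  exact ⟨b.num * (a * b).den, by linarith [Rat.mul_num_den' a b]⟩

lemma exists_den_eval_dvd (f : ℚ[X]) :
    ∃ B n : ℕ, B ≠ 0 ∧ ∀ t : ℚ, (f.eval t).den ∣ B * t.den ^ n := by
  induction f using Polynomial.induction_on' with
  | monomial n a =>
    refine ⟨a.den, n, a.den_nz, fun t ↦ ?_⟩
    simpa only [eval_monomial, Rat.den_pow] using Rat.mul_den_dvd a (t ^ n)
  | add f g hf hg =>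
    obtain ⟨B, m, hB, hf⟩ := hf
    obtain ⟨C, n, hC, hg⟩ := hg
    refine ⟨B * C, m + n, mul_ne_zero hB hC, fun t ↦ ?_⟩
    rw [eval_add, pow_add, mul_mul_mul_comm]
    exact (Rat.add_den_dvd _ _).trans (mul_dvd_mul (hf t) (hg t))

lemma eventually_eval_ne_zero {R : Type*} [CommRing R] [IsDomain R] {f : R[X]} (hf : f ≠ 0) :
    ∀ᶠ t in cofinite, f.eval t ≠ 0 :=
  (finite_setOfPred_isRoot hf).eventually_cofinite_notMem

/-- The conductor at `t` of the divisor made of the zeros of `f` and the point at infinity, which is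
the side of the abc-inequality attached to `f`. This is the product of the primes dividing the
numerator of `f t` or the denominator of `t`. At a root of `f` it takes the junk value
`radical 0 = 1`. -/
noncomputable def valueConductor (f : ℚ[X]) (t : ℚ) : ℕ :=
  radical (t.den * (f.eval t).num.natAbs)

lemma one_le_valueConductor (f : ℚ[X]) (t : ℚ) : (1 : ℝ) ≤ valueConductor f t :=
  Nat.one_le_cast.2 (Nat.radical_pos _)

lemma eventually_den_mul_num_eval_ne_zero {f : ℚ[X]} (hf : f ≠ 0) :
    ∀ᶠ t : ℚ in cofinite, t.den * (f.eval t).num.natAbs ≠ 0 :=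
  (eventually_eval_ne_zero hf).mono fun t ht ↦ mul_ne_zero t.den_nz (by simpa using ht)

lemma valueConductor_isBigO_of_dvd_pow {f g : ℚ[X]} {k : ℕ} (hg : g ≠ 0) (h : f ∣ g ^ k) :
    (fun t ↦ (valueConductor f t : ℝ)) =O[cofinite] fun t ↦ (valueConductor g t : ℝ) := by
  obtain ⟨r, hr⟩ := h
  obtain ⟨B, n, hB, hden⟩ := exists_den_eval_dvd r
  refine radical_isBigO_radical (b := B) (n := 1 + (k + (1 + n))) hB
    (eventually_den_mul_num_eval_ne_zero hg) fun t ↦ ?_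
  have hnum : (f.eval t).num.natAbs ∣ (g.eval t).num.natAbs ^ k * (r.eval t).den := by
    have := rat_num_dvd_num_mul_mul_den (f.eval t) (r.eval t)
    rw [← eval_mul, ← hr, eval_pow, Rat.num_pow] at this
    simpa [Int.natAbs_mul, Int.natAbs_pow] using Int.natAbs_dvd_natAbs.2 this
  set y := B * (t.den * (g.eval t).num.natAbs)
  have hy : t.den ∣ y := ⟨B * (g.eval t).num.natAbs, by grind⟩
  calc t.den * (f.eval t).num.natAbs
      ∣ t.den * ((g.eval t).num.natAbs ^ k * (B * t.den ^ n)) :=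
        mul_dvd_mul_left _ (hnum.trans (mul_dvd_mul_left _ (hden t)))
    _ ∣ y * (y ^ k * (y * y ^ n)) := by
        gcongr
        · exact ⟨B * t.den, by grind⟩
        · exact Dvd.intro _ rfl
    _ = y ^ (1 + (k + (1 + n))) := by ring

lemma valueConductor_comp_isBigO {f φ : ℚ[X]} (hf : f.comp φ ≠ 0) :
    (fun t ↦ (valueConductor f (φ.eval t) : ℝ)) =O[cofinite]
      fun t ↦ (valueConductor (f.comp φ) t : ℝ) := by
  obtain ⟨B, n, hB, hden⟩ := exists_den_eval_dvd φ
  refine radical_isBigO_radical (b := B) (n := 1 + n + 1) hB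
    (eventually_den_mul_num_eval_ne_zero hf) fun t ↦ ?_
  rw [eval_comp]
  set y := B * (t.den * (f.eval (φ.eval t)).num.natAbs)
  calc (φ.eval t).den * (f.eval (φ.eval t)).num.natAbs
      ∣ B * t.den ^ n * (f.eval (φ.eval t)).num.natAbs := mul_dvd_mul_right (hden t) _
    _ ∣ y * y ^ n * y := by
        gcongr
        · exact Dvd.intro _ rfl
        · exact ⟨B * (f.eval (φ.eval t)).num.natAbs, by grind⟩
        · exact ⟨B * t.den, by grind⟩
    _ = y ^ (1 + n + 1) := by ring

lemma rat_natAbs_num_mul_dvd (a b : ℚ) : (a * b).num.natAbs ∣ a.num.natAbs * b.num.natAbs := by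
  rw [← Int.natAbs_mul, Rat.num_mul_num_eq_num_mul_gcd, Int.natAbs_mul]
  exact Dvd.intro _ rfl

lemma valueConductor_mul_isBigO {f g : ℚ[X]} (hf : f ≠ 0) (hg : g ≠ 0) :
    (fun t ↦ (valueConductor (f * g) t : ℝ)) =O[cofinite]
      fun t ↦ (valueConductor f t : ℝ) * mulHeight₁ t ^ (g.natDegree : ℝ) := by
  obtain ⟨C, -, hle⟩ := exists_mulHeight₁_eval_le g
  refine .of_bound C ?_
  filter_upwards [eventually_den_mul_num_eval_ne_zero hf, eventually_eval_ne_zero hg]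
    with t hft hgt
  have hdvd : valueConductor (f * g) t ∣ (g.eval t).num.natAbs * valueConductor f t := by
    refine radical_dvd_mul_radical (n := 1) (by simpa using hgt) hft ?_
    rw [eval_mul, pow_one, mul_left_comm, mul_comm (g.eval t).num.natAbs]
    exact mul_dvd_mul_left _ (rat_natAbs_num_mul_dvd _ _)
  have hpos : 0 < (g.eval t).num.natAbs * valueConductor f t :=
    Nat.mul_pos (by simpa [Nat.pos_iff_ne_zero] using hgt) (Nat.radical_pos _)
  rw [Real.norm_of_nonneg (by positivity), Real.norm_of_nonneg (by positivity), Real.rpow_natCast]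
  calc (valueConductor (f * g) t : ℝ)
      ≤ (g.eval t).num.natAbs * valueConductor f t := mod_cast Nat.le_of_dvd hpos hdvd
    _ ≤ C * mulHeight₁ t ^ g.natDegree * valueConductor f t := by
      grw [natAbs_num_le_mulHeight₁, hle t]
    _ = C * (valueConductor f t * mulHeight₁ t ^ g.natDegree) := by ring

end Conductor

section RiemannHurwitz

variable {K : Type*} [Field K]

lemma comp_ne_zero_of_natDegree_ne_zero {q φ : K[X]} (hq : q ≠ 0) (hφ : φ.natDegree ≠ 0) :
    q.comp φ ≠ 0 := fun h ↦ by
  rcases comp_eq_zero_iff.1 h with h | ⟨-, h⟩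
  · exact hq h
  · exact hφ (by rw [h, natDegree_C])

variable [CharZero K]

lemma pow_succ_dvd_of_pow_dvd_derivative {p f : K[X]} (hp : Irreducible p) (hpf : p ∣ f) {n : ℕ}
    (h : p ^ n ∣ derivative f) : p ^ (n + 1) ∣ f := by
  induction n with
  | zero => simpa using hpf
  | succ n ih =>
    obtain ⟨s, rfl⟩ := ih ((pow_dvd_pow p n.le_succ).trans h)
    have hlead : p ^ n * p ∣ p ^ n * (C (n + 1 : K) * (derivative p * s)) := by
      rw [derivative_mul, derivative_pow_succ, dvd_add_left (dvd_mul_right _ _)] at h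
      convert h using 1 <;> ring
    have hn : IsUnit (C (n + 1 : K)) := isUnit_C.2 (Nat.cast_add_one_ne_zero n).isUnit
    have hp' : ¬ p ∣ derivative p := fun hd ↦
      hp.not_isUnit (hp.separable.isUnit_of_dvd' dvd_rfl hd)
    have hs : p ∣ s := by
      rw [mul_dvd_mul_iff_left (pow_ne_zero n hp.ne_zero), hn.dvd_mul_left] at hlead
      exact (hp.prime.dvd_or_dvd hlead).resolve_left hp'
    exact mul_dvd_mul_left _ hs

variable [DecidableEq K]

lemma radical_mul_dvd_of_dvd_derivative {f u : K[X]} {k : ℕ} (hf : f ≠ 0)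
    (hu : u ∣ derivative f) (huf : u ∣ f ^ k) : radical f * u ∣ f := by
  have hu0 : u ≠ 0 := ne_zero_of_dvd_ne_zero (pow_ne_zero k hf) huf
  refine (dvd_iff_emultiplicity_le (mul_ne_zero radical_ne_zero hu0)).2 fun p hp ↦ ?_
  rw [emultiplicity_mul hp]
  by_cases hpf : p ∣ f
  · have hfin : FiniteMultiplicity p u := .of_prime_left hp hu0
    have hrad : emultiplicity p (radical f) ≤ 1 :=
      (squarefree_iff_emultiplicity_le_one _).1 squarefree_radical p |>.resolve_right hp.not_isUnit
    grw [hrad, hfin.emultiplicity_eq_multiplicity, add_comm]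
    exact_mod_cast le_emultiplicity_of_pow_dvd
      (pow_succ_dvd_of_pow_dvd_derivative hp.irreducible hpf ((pow_multiplicity_dvd p u).trans hu))
  · rw [emultiplicity_eq_zero.2 fun h ↦ hpf (h.trans radical_dvd_self),
      emultiplicity_eq_zero.2 fun h ↦ hpf (hp.dvd_of_dvd_pow (h.trans huf)), add_zero]
    exact bot_le

lemma natDegree_radical_comp_add_le {q φ : K[X]} {k : ℕ} (hq : q ≠ 0) (hφ : φ.natDegree ≠ 0)
    (hcrit : derivative φ ∣ (q.comp φ) ^ k) :
    (radical (q.comp φ)).natDegree + φ.natDegree ≤ φ.natDegree * (radical q).natDegree + 1 := by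
  obtain ⟨n, r, hr⟩ := exists_dvd_radical_self_pow hq
  have hf₀ : (radical q).comp φ ≠ 0 := comp_ne_zero_of_natDegree_ne_zero radical_ne_zero hφ
  have hdvd : q.comp φ ∣ (radical q).comp φ ^ n := ⟨r.comp φ, by rw [← pow_comp, ← mul_comp, ← hr]⟩
  have hφ' : derivative φ ≠ 0 := fun h ↦ hφ (derivative_eq_zero.1 h)
  have hram : radical ((radical q).comp φ) * derivative φ ∣ (radical q).comp φ := by
    refine radical_mul_dvd_of_dvd_derivative (k := n * k) hf₀ ?_ ?_
    · rw [derivative_comp]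
      exact dvd_mul_right _ _
    · rw [pow_mul]
      exact hcrit.trans (pow_dvd_pow_of_dvd hdvd k)
  have hrad : radical (q.comp φ) ∣ radical ((radical q).comp φ) :=
    (radical_dvd_radical hdvd (pow_ne_zero n hf₀)).trans radical_pow_dvd
  have hle := natDegree_le_of_dvd ((mul_dvd_mul_right hrad _).trans hram) hf₀
  rw [natDegree_mul radical_ne_zero hφ', natDegree_comp, natDegree_derivative,
    mul_comm (natDegree _)] at hle
  omega

end RiemannHurwitz

section ABCBound

/-- The conclusion of the abc-conjecture for `f`, with the conductor bounded below by the height to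
the power `r - 1 - ε` for `r` the number of distinct complex roots of `f`. Since the conductor
is at least `1`, stating the bound along `cofinite` loses nothing. -/
def HasABCBound (f : ℚ[X]) : Prop :=
  ∀ ε : ℝ, 0 < ε → (fun t : ℚ ↦ mulHeight₁ t ^ ((radical f).natDegree - 1 - ε)) =O[cofinite]
    fun t ↦ (valueConductor f t : ℝ)

lemma mulHeight₁_rpow_isBigO_valueConductor (f : ℚ[X]) {a : ℝ} (ha : a ≤ 0) :
    (fun t ↦ mulHeight₁ t ^ a) =O[cofinite] fun t ↦ (valueConductor f t : ℝ) :=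
  .of_bound' <| .of_forall fun t ↦ by
    rw [Real.norm_of_nonneg (by positivity), Real.norm_natCast]
    exact (Real.rpow_le_one_of_one_le_of_nonpos (one_le_mulHeight₁ t) ha).trans
      (one_le_valueConductor f t)

lemma hasABCBound_of_natDegree_radical_le_one {f : ℚ[X]} (hf : (radical f).natDegree ≤ 1) :
    HasABCBound f := fun ε hε ↦
  mulHeight₁_rpow_isBigO_valueConductor f <| by
    have : ((radical f).natDegree : ℝ) ≤ 1 := mod_cast hf
    linarith

lemma HasABCBound.of_dvd_pow {f g : ℚ[X]} {k : ℕ} (hgb : HasABCBound g) (hg : g ≠ 0)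
    (h : f ∣ g ^ k) : HasABCBound f := by
  intro ε hε
  obtain ⟨e, he⟩ : radical f ∣ radical g :=
    (radical_dvd_radical h (pow_ne_zero _ hg)).trans radical_pow_dvd
  obtain ⟨n, hn⟩ := exists_dvd_radical_self_pow hg
  have he0 : e ≠ 0 := right_ne_zero_of_mul (he ▸ radical_ne_zero)
  have hdeg : (radical g).natDegree = (radical f).natDegree + e.natDegree := by
    rw [he, natDegree_mul radical_ne_zero he0]
  have hrad : (fun t ↦ (valueConductor (radical f) t : ℝ)) =O[cofinite]
      fun t ↦ (valueConductor f t : ℝ) :=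
    valueConductor_isBigO_of_dvd_pow (k := 1) (ne_zero_of_dvd_ne_zero (pow_ne_zero k hg) h)
      (by simpa using radical_dvd_self)
  have hcond : (fun t ↦ (valueConductor g t : ℝ)) =O[cofinite]
      fun t ↦ (valueConductor f t : ℝ) * mulHeight₁ t ^ (e.natDegree : ℝ) :=
    calc (fun t ↦ (valueConductor g t : ℝ))
        =O[cofinite] fun t ↦ (valueConductor (radical f * e) t : ℝ) :=
        valueConductor_isBigO_of_dvd_pow (he ▸ radical_ne_zero) (he ▸ hn)
      _ =O[cofinite]
          fun t ↦ (valueConductor (radical f) t : ℝ) * mulHeight₁ t ^ (e.natDegree : ℝ) :=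
        valueConductor_mul_isBigO radical_ne_zero he0
      _ =O[cofinite] fun t ↦ (valueConductor f t : ℝ) * mulHeight₁ t ^ (e.natDegree : ℝ) :=
        hrad.mul (isBigO_refl _ _)
  have hmul := ((hgb ε hε).trans hcond).mul
    (isBigO_refl (fun t : ℚ ↦ mulHeight₁ t ^ (-e.natDegree : ℝ)) cofinite)
  refine hmul.congr (fun t ↦ ?_) fun t ↦ ?_
  · rw [← Real.rpow_add (mulHeight₁_pos t), hdeg, Nat.cast_add]
    ring_nf
  · rw [mul_assoc, ← Real.rpow_add (mulHeight₁_pos t), add_neg_cancel, Real.rpow_zero, mul_one]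

lemma tendsto_eval_cofinite {R : Type*} [CommRing R] [IsDomain R] {φ : R[X]}
    (hφ : φ.natDegree ≠ 0) : Tendsto φ.eval cofinite cofinite := by
  refine Tendsto.cofinite_of_finite_preimage_singleton fun b ↦ ?_
  have hne : φ - C b ≠ 0 := fun h ↦ hφ <| by rw [sub_eq_zero.1 h, natDegree_C]
  refine (finite_setOfPred_isRoot hne).subset fun t ht ↦ ?_
  simpa [sub_eq_zero] using ht

lemma HasABCBound.comp {q φ : ℚ[X]} {k : ℕ} (hqb : HasABCBound q) (hq : q ≠ 0)
    (hφ : φ.natDegree ≠ 0) (hcrit : derivative φ ∣ (q.comp φ) ^ k) : HasABCBound (q.comp φ) := by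
  intro ε hε
  have hD : (0 : ℝ) < φ.natDegree := mod_cast Nat.pos_of_ne_zero hφ
  have hRH : ((radical (q.comp φ)).natDegree : ℝ) + φ.natDegree ≤
      φ.natDegree * (radical q).natDegree + 1 :=
    mod_cast natDegree_radical_comp_add_le hq hφ hcrit
  set D : ℝ := (φ.natDegree : ℝ)
  set e : ℝ := (radical q).natDegree - 1 - ε / D with he
  have hexp : (radical (q.comp φ)).natDegree - 1 - ε ≤ D * e := by
    rw [he, mul_sub, mul_sub, mul_div_cancel₀ _ hD.ne']
    linarith
  rcases le_or_gt e 0 with he0 | he0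
  · exact mulHeight₁_rpow_isBigO_valueConductor _
      (hexp.trans (mul_nonpos_of_nonneg_of_nonpos hD.le he0))
  have hlower : (fun t : ℚ ↦ mulHeight₁ t ^ D) =O[cofinite] fun t ↦ mulHeight₁ (φ.eval t) := by
    obtain ⟨C, hC, hle⟩ := exists_mul_mulHeight₁_pow_le φ
    refine .of_bound C⁻¹ (.of_forall fun t ↦ ?_)
    rw [Real.norm_of_nonneg (by positivity), Real.norm_of_nonneg (by positivity),
      Real.rpow_natCast, le_inv_mul_iff₀ hC]
    exact hle t
  calc (fun t ↦ mulHeight₁ t ^ ((radical (q.comp φ)).natDegree - 1 - ε))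
      =O[cofinite] fun t ↦ (mulHeight₁ t ^ D) ^ e := by
        simpa only [← Real.rpow_mul (mulHeight₁_nonneg _)] using mulHeight₁_rpow_isBigO hexp _
    _ =O[cofinite] fun t ↦ mulHeight₁ (φ.eval t) ^ e :=
        hlower.rpow he0.le (.of_forall fun t ↦ mulHeight₁_nonneg (φ.eval t))
    _ =O[cofinite] fun t ↦ (valueConductor q (φ.eval t) : ℝ) :=
        (hqb _ (div_pos hε hD)).comp_tendsto (tendsto_eval_cofinite hφ)
    _ =O[cofinite] fun t ↦ (valueConductor (q.comp φ) t : ℝ) :=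
        valueConductor_comp_isBigO (comp_ne_zero_of_natDegree_ne_zero hq hφ)

lemma ABCConjecture.exists_max_le (habc : ABCConjecture) {δ : ℝ} (hδ : 0 < δ) :
    ∃ K > 0, ∀ x y z : ℕ, x ≠ 0 → y ≠ 0 → z ≠ 0 → x.Coprime y →
      (x + y = z ∨ x + z = y ∨ y + z = x) →
        ((max x y : ℕ) : ℝ) ≤ K * ((radical (x * y * z) : ℕ) : ℝ) ^ (1 + δ) := by
  obtain ⟨K, hK, habcK⟩ := habc δ hδ
  simp only [radNat, ← Nat.radical_eq_prod_primeFactors] at habcK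
  refine ⟨K, hK, fun x y z hx hy hz hxy hsum ↦ ?_⟩
  replace hx := Nat.pos_of_ne_zero hx
  replace hy := Nat.pos_of_ne_zero hy
  replace hz := Nat.pos_of_ne_zero hz
  obtain h | h | h := hsum
  · calc ((max x y : ℕ) : ℝ) ≤ z := mod_cast (by omega)
      _ ≤ _ := habcK x y z hx hy hz hxy h
  · have hxz : x.Coprime z := by simpa [← h] using hxy
    rw [max_eq_right (by omega), mul_right_comm]
    exact habcK x z y hx hz hy hxz h
  · have hyz : y.Coprime z := by simpa [← h] using hxy.symm
    rw [max_eq_left (by omega), mul_assoc, mul_comm x]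
    exact habcK y z x hy hz hx hyz h

lemma radical_num_mul_den_dvd_valueConductor (t : ℚ) (ht : t * (t - 1) ≠ 0) :
    radical (t.num.natAbs * t.den * (t.num - t.den).natAbs) ∣
      valueConductor (X * (X - C 1)) t := by
  set w := t.den * (t * (t - 1)).num.natAbs with hw
  have hw0 : w ≠ 0 := mul_ne_zero t.den_nz (by simpa using ht)
  have hdvd : t.num.natAbs * (t.num - t.den).natAbs ∣ (t * (t - 1)).num.natAbs * t.den ^ 2 := by
    have hfrac : ((t.num * (t.num - t.den) : ℤ) : ℚ) * ((t.den ^ 2 : ℕ) : ℚ)⁻¹ = t * (t - 1) := by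
      push_cast
      rw [← Rat.mul_den_eq_num t]
      have := t.den_nz
      field_simp
    have hnum := rat_num_dvd_num_mul_mul_den ((t.num * (t.num - t.den) : ℤ) : ℚ)
      ((t.den ^ 2 : ℕ) : ℚ)⁻¹
    rw [hfrac, Rat.num_intCast, Rat.inv_natCast_den_of_pos (pow_pos t.den_pos 2)] at hnum
    simpa [Int.natAbs_mul, Int.natAbs_pow] using Int.natAbs_dvd_natAbs.2 hnum
  have : t.num.natAbs * t.den * (t.num - t.den).natAbs ∣ w ^ 3 :=
    calc t.num.natAbs * t.den * (t.num - t.den).natAbs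
        = t.den * (t.num.natAbs * (t.num - t.den).natAbs) := by ring
      _ ∣ t.den * ((t * (t - 1)).num.natAbs * t.den ^ 2) := mul_dvd_mul_left _ hdvd
      _ ∣ w ^ 3 := ⟨(t * (t - 1)).num.natAbs ^ 2, by rw [hw]; ring⟩
  have hrad : radical (t.num.natAbs * t.den * (t.num - t.den).natAbs) ∣ radical w :=
    (radical_dvd_radical this (pow_ne_zero 3 hw0)).trans radical_pow_dvd
  simpa [valueConductor] using hrad

lemma ABCConjecture.exists_mulHeight₁_le (habc : ABCConjecture) {ε : ℝ} (hε : 0 < ε) :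
    ∃ K, ∀ t : ℚ, t * (t - 1) ≠ 0 →
      mulHeight₁ t ≤ K * (valueConductor (X * (X - C 1)) t : ℝ) ^ (1 + ε) := by
  obtain ⟨K, hK, hle⟩ := habc.exists_max_le hε
  refine ⟨K, fun t ht ↦ ?_⟩
  have hnum : t.num.natAbs ≠ 0 := by simpa using left_ne_zero_of_mul ht
  have hsub : (t.num - t.den).natAbs ≠ 0 := by
    refine fun h ↦ right_ne_zero_of_mul ht ?_
    rw [sub_eq_zero, ← Rat.num_div_den t, show t.num = t.den by omega]
    simp
  have hrad : radical (t.num.natAbs * t.den * (t.num - t.den).natAbs) ≤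
      valueConductor (X * (X - C 1)) t :=
    Nat.le_of_dvd (Nat.radical_pos _) (radical_num_mul_den_dvd_valueConductor t ht)
  calc mulHeight₁ t = ((max t.num.natAbs t.den : ℕ) : ℝ) := Rat.mulHeight₁_eq_max t
    _ ≤ K * ((radical (t.num.natAbs * t.den * (t.num - t.den).natAbs) : ℕ) : ℝ) ^ (1 + ε) :=
      hle _ _ _ hnum t.den_nz hsub t.reduced (by omega)
    _ ≤ K * (valueConductor (X * (X - C 1)) t : ℝ) ^ (1 + ε) := by gcongr

lemma ABCConjecture.hasABCBound_X_mul_X_sub_one (habc : ABCConjecture) :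
    HasABCBound (X * (X - C 1)) := by
  intro ε hε
  have hne : (X * (X - C 1) : ℚ[X]) ≠ 0 := mul_ne_zero X_ne_zero (X_sub_C_ne_zero 1)
  obtain ⟨K, hle⟩ := habc.exists_mulHeight₁_le hε
  have hdeg : ((radical (X * (X - C 1) : ℚ[X])).natDegree : ℝ) ≤ 2 := by
    have h := natDegree_le_of_dvd radical_dvd_self hne
    rw [natDegree_mul X_ne_zero (X_sub_C_ne_zero 1), natDegree_X, natDegree_X_sub_C] at h
    exact mod_cast h
  have hexp : (radical (X * (X - C 1) : ℚ[X])).natDegree - 1 - ε ≤ 1 / (1 + ε) := by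
    rw [le_div_iff₀ (by positivity)]
    nlinarith
  have hbase : mulHeight₁ =O[cofinite]
      fun t ↦ (valueConductor (X * (X - C 1)) t : ℝ) ^ (1 + ε) := by
    refine .of_bound K ((eventually_den_mul_num_eval_ne_zero hne).mono fun t ht ↦ ?_)
    rw [Real.norm_of_nonneg (by positivity), Real.norm_of_nonneg (by positivity)]
    exact hle t (by simpa using ht)
  calc (fun t ↦ mulHeight₁ t ^ ((radical (X * (X - C 1) : ℚ[X])).natDegree - 1 - ε))
      =O[cofinite] fun t : ℚ ↦ mulHeight₁ t ^ (1 / (1 + ε)) := mulHeight₁_rpow_isBigO hexp _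
    _ =O[cofinite] fun t ↦ ((valueConductor (X * (X - C 1)) t : ℝ) ^ (1 + ε)) ^ (1 / (1 + ε)) :=
      hbase.rpow (by positivity) (.of_forall fun t ↦ by positivity)
    _ = fun t ↦ (valueConductor (X * (X - C 1)) t : ℝ) := by
      ext t
      rw [← Real.rpow_mul (by positivity), mul_one_div_cancel (by positivity), Real.rpow_one]

end ABCBound

section Belyi

open Finset

variable {K : Type*} [Field K]

lemma prod_X_sub_C_ne_zero (S : Finset K) : ∏ a ∈ S, (X - C a) ≠ 0 :=
  prod_ne_zero_iff.2 fun a _ ↦ X_sub_C_ne_zero a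

lemma prod_X_sub_C_dvd {S : Finset K} {f : K[X]} (h : ∀ a ∈ S, f.IsRoot a) :
    ∏ a ∈ S, (X - C a) ∣ f :=
  prod_dvd_of_coprime ((pairwise_coprime_X_sub_C Function.injective_id).set_pairwise _)
    fun a ha ↦ dvd_iff_isRoot.2 (h a ha)

lemma prod_X_sub_C_dvd_comp {S T : Finset K} {φ : K[X]} (h : ∀ a ∈ S, φ.eval a ∈ T) :
    ∏ a ∈ S, (X - C a) ∣ (∏ b ∈ T, (X - C b)).comp φ := by
  refine prod_X_sub_C_dvd fun a ha ↦ ?_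
  rw [IsRoot, eval_comp, eval_prod]
  exact prod_eq_zero (h a ha) (by simp)

lemma derivative_X_sub_C_pow_mul_X_sub_C_pow {α β γ : K} {m n : ℕ}
    (h : ((m : K) + 1) * (γ - β) = (n + 1) * (β - α)) :
    derivative ((X - C α) ^ (m + 1) * (X - C γ) ^ (n + 1)) =
      C ((m : K) + 1 + (n + 1)) * ((X - C α) ^ m * (X - C γ) ^ n * (X - C β)) := by
  have hC := congrArg C h
  simp only [map_mul, map_sub, map_add, map_natCast, map_one] at hC
  simp only [derivative_mul, derivative_pow_succ, derivative_X_sub_C, map_add, map_natCast,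
    map_one]
  linear_combination (-1 : K[X]) * (X - C α) ^ m * (X - C γ) ^ n * hC

lemma exists_natCast_add_one_mul_eq {a b : ℚ} (ha : 0 < a) (hb : 0 < b) :
    ∃ m n : ℕ, ((m : ℚ) + 1) * a = (n + 1) * b := by
  obtain ⟨m, hm⟩ := Nat.exists_eq_add_one.2 (Int.natAbs_pos.2 (Rat.num_pos.2 (div_pos hb ha)).ne')
  obtain ⟨n, hn⟩ := Nat.exists_eq_add_one.2 (b / a).den_pos
  have hnum : ((m : ℚ) + 1) = (b / a).num := by
    rw [← Int.natAbs_of_nonneg (Rat.num_pos.2 (div_pos hb ha)).le, hm]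
    push_cast
    rfl
  have hden : ((n : ℚ) + 1) = (b / a).den := by
    rw [hn]
    push_cast
    rfl
  refine ⟨m, n, ?_⟩
  rw [hnum, hden, ← Rat.mul_den_eq_num]
  field_simp

lemma exists_lt_lt_of_three_le_card {ι : Type*} [LinearOrder ι] {S : Finset ι} (hS : 3 ≤ #S) :
    ∃ a ∈ S, ∃ b ∈ S, ∃ c ∈ S, a < b ∧ b < c :=
  let e := S.orderEmbOfFin rfl
  ⟨e ⟨0, by omega⟩, S.orderEmbOfFin_mem rfl _, e ⟨1, by omega⟩, S.orderEmbOfFin_mem rfl _,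
    e ⟨2, by omega⟩, S.orderEmbOfFin_mem rfl _, by simp [e], by simp [e]⟩

/- Take `φ = (X - α) ^ (m + 1) * (X - γ) ^ (n + 1)` with `α < β < γ` in `S` and `m`, `n` such that
the last critical point is `β`; then `φ` takes the same value at `α` and `γ`. -/
lemma exists_card_image_eval_lt {S : Finset ℚ} (hS : 3 ≤ #S) :
    ∃ φ : ℚ[X], φ.natDegree ≠ 0 ∧ #(S.image φ.eval) < #S ∧
      ∃ k, derivative φ ∣ (∏ a ∈ S, (X - C a)) ^ k := by
  obtain ⟨α, hα, β, hβ, γ, hγ, hαβ, hβγ⟩ := exists_lt_lt_of_three_le_card hS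
  obtain ⟨m, n, hmn⟩ := exists_natCast_add_one_mul_eq (sub_pos.2 hβγ) (sub_pos.2 hαβ)
  set φ : ℚ[X] := (X - C α) ^ (m + 1) * (X - C γ) ^ (n + 1) with hφ
  refine ⟨φ, ?_, card_image_le.lt_of_ne fun hcard ↦ ?_, m + n + 1, ?_⟩
  · rw [((monic_X_sub_C α).pow _).natDegree_mul ((monic_X_sub_C γ).pow _), natDegree_pow,
      natDegree_X_sub_C]
    omega
  · have : α = γ := card_image_iff.1 hcard hα hγ (by simp [hφ])
    exact (hαβ.trans hβγ).ne this
  · have hunit : IsUnit (C ((m : ℚ) + 1 + (n + 1))) := isUnit_C.2 (by positivity : _ ≠ _).isUnit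
    rw [derivative_X_sub_C_pow_mul_X_sub_C_pow hmn, hunit.mul_left_dvd, pow_succ, pow_add]
    gcongr <;> exact dvd_prod_of_mem (fun a : ℚ ↦ X - C a) ‹_›

/- Take for `g` the characteristic polynomial of multiplication by `h` on
`AdjoinRoot (derivative h)`, which vanishes at the critical values of `h`. -/
lemma exists_derivative_dvd_comp [CharZero K] {h : K[X]} (hh : h.natDegree ≠ 0) :
    ∃ g : K[X], g ≠ 0 ∧ g.natDegree < h.natDegree ∧ derivative h ∣ g.comp h := by
  have hh' : derivative h ≠ 0 := fun h' ↦ hh (derivative_eq_zero.1 h')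
  let basis := AdjoinRoot.powerBasis hh'
  have : Module.Finite K (AdjoinRoot (derivative h)) := basis.finite
  let x : AdjoinRoot (derivative h) := AdjoinRoot.mk _ h
  let g := (Algebra.lmul K (AdjoinRoot (derivative h)) x).charpoly
  refine ⟨g, (LinearMap.charpoly_monic _).ne_zero, ?_, ?_⟩
  · rw [LinearMap.charpoly_natDegree, basis.finrank, AdjoinRoot.powerBasis_dim,
      natDegree_derivative]
    omega
  · have hx : aeval x g = 0 := by
      rw [← map_eq_zero_iff _ (Algebra.lmul_injective (R := K)), ← aeval_algHom_apply]
      exact LinearMap.aeval_self_charpoly _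
    rw [← AdjoinRoot.mk_eq_zero, ← hx]
    exact (aeval_algHom_apply (AdjoinRoot.mkₐ (derivative h)) h g).symm

lemma HasABCBound.of_dvd_comp_pow {f q φ : ℚ[X]} {k m : ℕ} (hqb : HasABCBound q) (hq : q ≠ 0)
    (hφ : φ.natDegree ≠ 0) (hcrit : derivative φ ∣ q.comp φ ^ k) (hf : f ∣ q.comp φ ^ m) :
    HasABCBound f :=
  (hqb.comp hq hφ hcrit).of_dvd_pow (comp_ne_zero_of_natDegree_ne_zero hq hφ) hf

lemma ABCConjecture.hasABCBound_X_sub_C_mul_X_sub_C (habc : ABCConjecture) {a b : ℚ}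
    (hab : a ≠ b) : HasABCBound ((X - C a) * (X - C b)) := by
  have hba : b - a ≠ 0 := sub_ne_zero.2 hab.symm
  have hunit : IsUnit (C (b - a)⁻¹) := isUnit_C.2 (inv_ne_zero hba).isUnit
  refine habc.hasABCBound_X_mul_X_sub_one.of_dvd_comp_pow (φ := C (b - a)⁻¹ * (X - C a))
    (k := 0) (m := 1) (mul_ne_zero X_ne_zero (X_sub_C_ne_zero 1)) ?_ ?_ ?_
  · rw [natDegree_C_mul (inv_ne_zero hba), natDegree_X_sub_C]
    exact one_ne_zero
  · simpa using hunit.dvd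
  · rw [pow_one, mul_comp, X_comp]
    exact mul_dvd_mul (dvd_mul_left _ _) (dvd_iff_isRoot.2 (by simp [hba]))

lemma ABCConjecture.hasABCBound_prod_X_sub_C (habc : ABCConjecture) (S : Finset ℚ) :
    HasABCBound (∏ a ∈ S, (X - C a)) := by
  induction hn : #S using Nat.strong_induction_on generalizing S with
  | _ n ih =>
  obtain hS | hS | hS : #S ≤ 1 ∨ #S = 2 ∨ 3 ≤ #S := by omega
  · refine hasABCBound_of_natDegree_radical_le_one ?_
    grw [natDegree_le_of_dvd radical_dvd_self (prod_X_sub_C_ne_zero S),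
      natDegree_finsetProd_X_sub_C_eq_card, hS]
  · obtain ⟨a, b, hab, rfl⟩ := card_eq_two.1 hS
    rw [prod_pair hab]
    exact habc.hasABCBound_X_sub_C_mul_X_sub_C hab
  · obtain ⟨φ, hφ, hcard, k, hcrit⟩ := exists_card_image_eval_lt hS
    have hdvd := prod_X_sub_C_dvd_comp fun a (ha : a ∈ S) ↦ mem_image_of_mem φ.eval ha
    exact (ih _ (hn ▸ hcard) _ rfl).of_dvd_comp_pow (m := 1) (prod_X_sub_C_ne_zero _) hφ
      (hcrit.trans (pow_dvd_pow_of_dvd hdvd k)) (by rwa [pow_one])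

lemma ABCConjecture.hasABCBound_mul_prod_X_sub_C (habc : ABCConjecture) {h : ℚ[X]} (hh : h ≠ 0)
    (S : Finset ℚ) : HasABCBound (h * ∏ a ∈ S, (X - C a)) := by
  induction hn : h.natDegree using Nat.strong_induction_on generalizing h S with
  | _ n ih =>
  rcases eq_or_ne h.natDegree 0 with hdeg | hdeg
  · have hunit : IsUnit h := isUnit_iff_degree_eq_zero.2 (by rw [degree_eq_natDegree hh, hdeg]; rfl)
    refine (habc.hasABCBound_prod_X_sub_C S).of_dvd_pow (k := 1) (prod_X_sub_C_ne_zero S) ?_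
    rw [pow_one, hunit.mul_left_dvd]
  obtain ⟨g, hg, hglt, hcrit⟩ := exists_derivative_dvd_comp hdeg
  set T := insert 0 (S.image h.eval)
  have hroots : h ∣ (∏ b ∈ T, (X - C b)).comp h := by
    have hX : X - C 0 ∣ ∏ b ∈ T, (X - C b) := dvd_prod_of_mem _ (mem_insert_self 0 _)
    simpa only [coe_compRingHom_apply, sub_comp, X_comp, C_comp, C_0, sub_zero] using
      map_dvd (compRingHom h) hX
  have hpoints : ∏ a ∈ S, (X - C a) ∣ (∏ b ∈ T, (X - C b)).comp h :=
    prod_X_sub_C_dvd_comp fun a ha ↦ mem_insert_of_mem (mem_image_of_mem h.eval ha)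
  refine (ih _ (hn ▸ hglt) hg T rfl).of_dvd_comp_pow (k := 1) (m := 2)
    (mul_ne_zero hg (prod_X_sub_C_ne_zero T)) hdeg ?_ ?_
  · rw [pow_one, mul_comp]
    exact hcrit.mul_right _
  · rw [mul_comp, mul_pow, sq (comp (∏ b ∈ T, _) h)]
    exact (mul_dvd_mul hroots hpoints).mul_left _

theorem ABCConjecture.hasABCBound (habc : ABCConjecture) {f : ℚ[X]} (hf : f ≠ 0) :
    HasABCBound f := by
  simpa using habc.hasABCBound_mul_prod_X_sub_C hf ∅

end Belyi

section Twists

lemma SqfInt.squarefree {d : ℤ} (hd : SqfInt d) : Squarefree d := by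
  rw [← Int.squarefree_natAbs, Nat.squarefree_iff_prime_squarefree]
  exact fun p hp h ↦ hd.2.2 p hp (by rwa [← Nat.cast_pow, Int.natCast_dvd, sq])

lemma exists_eq_mul_sq_of_mul_eq_sq {d W : ℤ} (hd : Squarefree d) {z : ℚ}
    (h : z ^ 2 = d * W) : ∃ w : ℤ, W = d * w ^ 2 := by
  obtain ⟨s, hs⟩ : IsSquare (d * W) :=
    Rat.isSquare_intCast_iff.1 ⟨z, by rw [Int.cast_mul, ← h, sq]⟩
  obtain ⟨w, rfl⟩ : d ∣ s := hd.isRadical 2 s ⟨W, by rw [sq, hs]⟩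
  exact ⟨w, mul_left_cancel₀ hd.ne_zero (by rw [hs]; ring)⟩

lemma subsingleton_squarefree_mul_eq_sq {q : ℚ} (hq : q ≠ 0) :
    {d : ℤ | Squarefree d ∧ ∃ y : ℚ, y ^ 2 = d * q}.Subsingleton := by
  rintro d ⟨hd, y, hy⟩ d' ⟨hd', y', hy'⟩
  have hprod : (y * y' / q) ^ 2 = d * d' := by
    rw [div_pow, mul_pow, hy, hy']
    field_simp
  obtain ⟨w, rfl⟩ := exists_eq_mul_sq_of_mul_eq_sq hd hprod
  have hw : IsUnit w := hd' w ⟨d, by ring⟩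
  rw [Int.isUnit_sq hw, mul_one]

lemma exists_intCast_eq_den_pow_mul_aeval (P : ℤ[X]) {n : ℕ} (hn : P.natDegree ≤ n) :
    ∃ C > 0, ∀ t : ℚ, ∃ D : ℤ, (D : ℚ) = t.den ^ n * aeval t P ∧
      |(D : ℝ)| ≤ C * mulHeight₁ t ^ n := by
  refine ⟨∑ i ∈ Finset.range (n + 1), |(P.coeff i : ℝ)| + 1, by positivity, fun t ↦
    ⟨∑ i ∈ Finset.range (n + 1), P.coeff i * (t.num ^ i * t.den ^ (n - i)), ?_, ?_⟩⟩
  · rw [aeval_eq_sum_range' (Nat.lt_succ_of_le hn), Finset.mul_sum]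
    push_cast
    refine Finset.sum_congr rfl fun i hi ↦ ?_
    rw [← pow_mul_pow_sub (t.den : ℚ) (Finset.mem_range_succ_iff.1 hi), ← Rat.mul_den_eq_num,
      zsmul_eq_mul]
    ring
  · have hnum : |(t.num : ℝ)| ≤ mulHeight₁ t := by
      simpa only [Nat.cast_natAbs, Int.cast_abs] using natAbs_num_le_mulHeight₁ t
    have hden := den_le_mulHeight₁ t
    push_cast
    calc |∑ i ∈ Finset.range (n + 1), (P.coeff i : ℝ) * (t.num ^ i * t.den ^ (n - i))|
        ≤ ∑ i ∈ Finset.range (n + 1), |(P.coeff i : ℝ) * (t.num ^ i * t.den ^ (n - i))| :=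
          Finset.abs_sum_le_sum_abs _ _
      _ ≤ ∑ i ∈ Finset.range (n + 1), |(P.coeff i : ℝ)| * mulHeight₁ t ^ n := by
          gcongr with i hi
          rw [abs_mul, abs_mul, abs_pow, abs_pow, Nat.abs_cast,
            ← pow_mul_pow_sub (mulHeight₁ t) (Finset.mem_range_succ_iff.1 hi)]
          gcongr
      _ ≤ _ := by
          rw [← Finset.sum_mul]
          gcongr
          linarith

lemma sq_valueConductor_le {P : ℤ[X]} {k : ℕ} {d D : ℤ} {t y : ℚ} (hd : Squarefree d)
    (hy : y ≠ 0) (h : y ^ 2 = d * aeval t P) (hD : (D : ℚ) = t.den ^ (2 * k + 1) * aeval t P) :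
    valueConductor (P.map (Int.castRingHom ℚ)) t ^ 2 ≤ d.natAbs * (t.den * D.natAbs) := by
  have hden : (t.den : ℚ) ≠ 0 := mod_cast t.den_nz
  have hsq : (t.den ^ (k + 1) * y) ^ 2 = d * (t.den * D : ℤ) := by
    push_cast
    rw [mul_pow, h, hD]
    ring
  obtain ⟨w, hw⟩ := exists_eq_mul_sq_of_mul_eq_sq hd hsq
  have hw' : t.den * D.natAbs = d.natAbs * w.natAbs ^ 2 := by
    simpa [Int.natAbs_mul, Int.natAbs_pow] using congrArg Int.natAbs hw
  have hw0 : d.natAbs * w.natAbs ≠ 0 := by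
    intro h0
    have : (d : ℚ) * (t.den * D : ℤ) = 0 := by
      rw [hw]
      rcases mul_eq_zero.1 h0 with h0 | h0 <;> simp [Int.natAbs_eq_zero.1 h0]
    exact pow_ne_zero 2 (mul_ne_zero (pow_ne_zero _ hden) hy) (hsq.trans this)
  have hnum : (aeval t P).num.natAbs ∣ D.natAbs := by
    have := rat_num_dvd_num_mul_mul_den (aeval t P) ((t.den ^ (2 * k + 1) : ℕ) : ℚ)
    rw [mul_comm (aeval t P), Nat.cast_pow, ← hD, Rat.num_intCast, ← Nat.cast_pow,
      Rat.den_natCast, Nat.cast_one, mul_one] at this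
    exact Int.natAbs_dvd_natAbs.2 this
  have hdvd : t.den * (aeval t P).num.natAbs ∣ (d.natAbs * w.natAbs) ^ 2 :=
    (mul_dvd_mul_left _ hnum).trans ⟨d.natAbs, by rw [hw']; ring⟩
  have hrad : valueConductor (P.map (Int.castRingHom ℚ)) t ∣ d.natAbs * w.natAbs := by
    rw [valueConductor, ← algebraMap_int_eq, eval_map_algebraMap]
    exact (radical_dvd_radical hdvd (pow_ne_zero 2 hw0)).trans
      (radical_pow_dvd.trans radical_dvd_self)
  calc valueConductor (P.map (Int.castRingHom ℚ)) t ^ 2 ≤ (d.natAbs * w.natAbs) ^ 2 :=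
        Nat.pow_le_pow_left (Nat.le_of_dvd (Nat.pos_of_ne_zero hw0) hrad) 2
    _ = d.natAbs * (t.den * D.natAbs) := by rw [hw']; ring

lemma HasABCBound.exists_mulHeight₁_rpow_le {f : ℚ[X]} (hf : HasABCBound f) {a : ℝ}
    (ha : a < (radical f).natDegree - 1) :
    ∃ C, ∀ t : ℚ, mulHeight₁ t ^ a ≤ C * valueConductor f t := by
  have h := hf _ (sub_pos.2 ha)
  rw [sub_sub_cancel, isBigO_cofinite_iff fun t ht ↦
    absurd ht (zero_lt_one.trans_le (one_le_valueConductor f t)).ne'] at h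
  obtain ⟨C, hC⟩ := h
  refine ⟨C, fun t ↦ ?_⟩
  have := hC t
  rwa [Real.norm_natCast, Real.norm_of_nonneg (by positivity)] at this

theorem ABCConjecture.exists_mulHeight₁_rpow_le_mul_abs (habc : ABCConjecture) {P : ℤ[X]}
    (hsep : (P.map (Int.castRingHom ℚ)).Separable) {κ : ℝ}
    (hκ : κ < P.natDegree - (P.natDegree / 2 : ℕ) - 2) :
    ∃ K > 0, ∀ (d : ℤ) (t y : ℚ), Squarefree d → y ≠ 0 → y ^ 2 = d * aeval t P →
      mulHeight₁ t ^ (2 * κ) ≤ K * |(d : ℝ)| := by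
  set f := P.map (Int.castRingHom ℚ)
  set k := P.natDegree / 2
  have hdeg : P.natDegree ≤ (radical f).natDegree := by
    rw [← natDegree_map_eq_of_injective (RingHom.injective_int (Int.castRingHom ℚ)) P]
    exact natDegree_le_of_dvd (hsep.squarefree.isRadical.dvd_radical hsep.ne_zero) radical_ne_zero
  have hdeg' : (P.natDegree : ℝ) ≤ (radical f).natDegree := mod_cast hdeg
  obtain ⟨C, hC⟩ := (habc.hasABCBound hsep.ne_zero).exists_mulHeight₁_rpow_le
    (a := k + 1 + κ) (by linarith)
  obtain ⟨B, hB, hval⟩ := exists_intCast_eq_den_pow_mul_aeval P (n := 2 * k + 1) (by omega)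
  refine ⟨C ^ 2 * B + 1, by positivity, fun d t y hd hy h ↦ ?_⟩
  obtain ⟨D, hD, hDle⟩ := hval t
  have hcond : (valueConductor f t : ℝ) ^ 2 ≤ |(d : ℝ)| * (t.den * |(D : ℝ)|) := by
    simpa [Nat.cast_natAbs] using Nat.cast_le (α := ℝ).2 (sq_valueConductor_le hd hy h hD)
  have hH := mulHeight₁_pos t
  refine le_of_mul_le_mul_right ?_ (pow_pos hH (2 * k + 2))
  calc mulHeight₁ t ^ (2 * κ) * mulHeight₁ t ^ (2 * k + 2)
      = (mulHeight₁ t ^ (k + 1 + κ)) ^ 2 := by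
        rw [← Real.rpow_natCast, ← Real.rpow_natCast, ← Real.rpow_add hH, ← Real.rpow_mul hH.le]
        push_cast
        ring_nf
    _ ≤ (C * valueConductor f t) ^ 2 := by gcongr; exact hC t
    _ ≤ C ^ 2 * (|(d : ℝ)| * (mulHeight₁ t * (B * mulHeight₁ t ^ (2 * k + 1)))) := by
        rw [mul_pow]
        grw [hcond, den_le_mulHeight₁ t, hDle]
    _ = C ^ 2 * B * |(d : ℝ)| * mulHeight₁ t ^ (2 * k + 2) := by ring
    _ ≤ (C ^ 2 * B + 1) * |(d : ℝ)| * mulHeight₁ t ^ (2 * k + 2) := by gcongr; linarith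

/-- The squarefree integers `d` of absolute value at most `x` for which the twist `y ^ 2 = d * P(t)`
has an affine rational point with `y ≠ 0`. -/
def affineTwists (P : ℤ[X]) (x : ℕ) : Set ℤ :=
  {d | Squarefree d ∧ |d| ≤ x ∧ ∃ t y : ℚ, y ≠ 0 ∧ y ^ 2 = d * aeval t P}

lemma finite_affineTwists (P : ℤ[X]) (x : ℕ) : (affineTwists P x).Finite :=
  (Set.finite_Icc (-(x : ℤ)) x).subset fun _ hd ↦ abs_le.1 hd.2.1

lemma ncard_affineTwists_le {P : ℤ[X]} {K κ : ℝ} (hK : 0 ≤ K) (hκ : 0 < κ)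
    (h : ∀ (d : ℤ) (t y : ℚ), Squarefree d → y ≠ 0 → y ^ 2 = d * aeval t P →
      mulHeight₁ t ^ (2 * κ) ≤ K * |(d : ℝ)|) (x : ℕ) :
    ((affineTwists P x).ncard : ℝ) ≤ 3 * (K * x) ^ (1 / κ) := by
  choose! τ y hy hτ using fun (d : ℤ) (hd : d ∈ affineTwists P x) ↦ hd.2.2
  set B : ℝ := (K * x) ^ (1 / (2 * κ)) with hB
  have hmaps : Set.MapsTo τ (affineTwists P x) {t | mulHeight₁ t ≤ B} := fun d hd ↦ by
    have hd' : |(d : ℝ)| ≤ x := mod_cast hd.2.1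
    rw [Set.mem_ofPred_eq, hB, one_div, Real.le_rpow_inv_iff_of_pos (by positivity) (by positivity)
      (by positivity)]
    grw [h d (τ d) (y d) hd.1 (hy d hd) (hτ d hd), hd']
  have hinj : Set.InjOn τ (affineTwists P x) := fun d hd d' hd' hdd' ↦ by
    have hP : aeval (τ d) P ≠ 0 := right_ne_zero_of_mul (hτ d hd ▸ pow_ne_zero 2 (hy d hd))
    exact subsingleton_squarefree_mul_eq_sq hP ⟨hd.1, y d, hτ d hd⟩
      ⟨hd'.1, y d', hdd' ▸ hτ d' hd'⟩
  calc ((affineTwists P x).ncard : ℝ) ≤ ({t : ℚ | mulHeight₁ t ≤ B}.ncard : ℝ) :=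
        mod_cast Set.ncard_le_ncard_of_injOn τ hmaps hinj (Northcott.finite_le B)
    _ ≤ 3 * B ^ 2 := ncard_mulHeight₁_le (by positivity)
    _ = 3 * (K * x) ^ (1 / κ) := by
        rw [hB, ← Real.rpow_mul_natCast (by positivity)]
        congr 2
        push_cast
        field_simp

lemma ncard_le_ncard_affineTwists_add_one {P : ℤ[X]} {x : ℕ} {q : ℚ} (hq : q ≠ 0) {D : Set ℤ}
    (hD : D ⊆ affineTwists P x ∪ {d | Squarefree d ∧ ∃ y : ℚ, y ^ 2 = d * q}) :
    D.ncard ≤ (affineTwists P x).ncard + 1 := by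
  have hsub := subsingleton_squarefree_mul_eq_sq hq
  grw [Set.ncard_le_ncard hD ((finite_affineTwists P x).union hsub.finite), Set.ncard_union_le,
    (Set.ncard_le_one hsub.finite).2 fun _ h _ h' ↦ hsub h h']

lemma eventually_mul_rpow_add_le {a b : ℝ} (ha : 0 ≤ a) (hab : a < b) (C : ℝ) {D : ℝ}
    (hD : 0 ≤ D) : ∀ᶠ x : ℕ in atTop, C * (x : ℝ) ^ a + D ≤ (x : ℝ) ^ b := by
  have htend : Tendsto (fun x : ℕ ↦ (x : ℝ) ^ (b - a)) atTop atTop :=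
    (tendsto_rpow_atTop (sub_pos.2 hab)).comp tendsto_natCast_atTop_atTop
  filter_upwards [htend.eventually_ge_atTop (C + D), eventually_ge_atTop 1] with x hx hx1
  have hx1' : (1 : ℝ) ≤ x := mod_cast hx1
  calc C * (x : ℝ) ^ a + D ≤ C * (x : ℝ) ^ a + D * (x : ℝ) ^ a := by
        gcongr
        exact le_mul_of_one_le_right hD (Real.one_le_rpow hx1' ha)
    _ = (C + D) * (x : ℝ) ^ a := by ring
    _ ≤ (x : ℝ) ^ (b - a) * (x : ℝ) ^ a := by gcongr
    _ = (x : ℝ) ^ b := by rw [← Real.rpow_add (by positivity), sub_add_cancel]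

theorem ABCConjecture.eventually_ncard_affineTwists_add_one_le (habc : ABCConjecture) {P : ℤ[X]}
    (hsep : (P.map (Int.castRingHom ℚ)).Separable) {b : ℝ} (hb : 0 < b)
    (hbP : b⁻¹ < P.natDegree - (P.natDegree / 2 : ℕ) - 2) :
    ∀ᶠ x : ℕ in atTop, (((affineTwists P x).ncard + 1 : ℕ) : ℝ) ≤ (x : ℝ) ^ b := by
  obtain ⟨κ, hbκ, hκP⟩ := exists_between hbP
  have hκ : 0 < κ := (inv_pos.2 hb).trans hbκ
  obtain ⟨K, hK, hheight⟩ := habc.exists_mulHeight₁_rpow_le_mul_abs hsep hκP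
  have hκb : 1 / κ < b := by rw [one_div]; exact inv_lt_of_inv_lt₀ hb hbκ
  filter_upwards [eventually_mul_rpow_add_le (by positivity) hκb (3 * K ^ (1 / κ)) zero_le_one]
    with x hx
  have hcount := ncard_affineTwists_le hK.le hκ hheight x
  rw [Real.mul_rpow hK.le x.cast_nonneg, ← mul_assoc] at hcount
  rw [Nat.cast_add_one]
  linarith

end Twists

theorem stmt3 (habc : ABCConjecture) (N : ℕ) (hN : 5 ≤ N) (P : Polynomial ℤ)
    (hdeg : P.natDegree = N) (hP0 : P ≠ 0)
    (hsep : (P.map (Int.castRingHom ℚ)).Separable) :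
    ∀ ε : ℝ, 0 < ε → ∃ x₀ : ℕ, ∀ x : ℕ, x₀ ≤ x →
      ({d : ℤ | SqfInt d ∧ |d| ≤ (x : ℤ) ∧
          ((∃ t y : ℚ, y ≠ 0 ∧ y ^ 2 = (d : ℚ) * Polynomial.aeval t P) ∨
           (Even N ∧ ∃ y : ℚ, y ≠ 0 ∧ (d : ℚ) * (P.leadingCoeff : ℚ) = y ^ 2))}.ncard : ℝ)
        ≤ (x : ℝ) ^ ((1 : ℝ) / ((((N - 1) / 2 : ℕ) : ℝ) - 1) + ε) := by
  intro ε hε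
  subst hdeg
  set N := P.natDegree
  set g := (N - 1) / 2
  have hlead : (P.leadingCoeff : ℚ) ≠ 0 := Int.cast_ne_zero.2 (leadingCoeff_ne_zero.2 hP0)
  have hg : (2 : ℝ) ≤ g := mod_cast (by omega : 2 ≤ g)
  have hgN : (g : ℝ) + (N / 2 : ℕ) + 1 = N := mod_cast (by omega : g + N / 2 + 1 = N)
  have hb : (0 : ℝ) < 1 / (g - 1) + ε := add_pos (one_div_pos.2 (by linarith)) hε
  have hbg : (1 / ((g : ℝ) - 1) + ε)⁻¹ < g - 1 :=
    inv_lt_of_inv_lt₀ (by linarith) (by rw [← one_div]; exact lt_add_of_pos_right _ hε)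
  obtain ⟨x₀, hx₀⟩ := eventually_atTop.1
    (habc.eventually_ncard_affineTwists_add_one_le hsep hb (by linarith))
  refine ⟨x₀, fun x hx ↦ (Nat.cast_le.2 ?_).trans (hx₀ x hx)⟩
  refine ncard_le_ncard_affineTwists_add_one hlead ?_
  rintro d ⟨hd, hdx, h | ⟨-, y, -, hy⟩⟩
  · exact .inl ⟨hd.squarefree, hdx, h⟩
  · exact .inr ⟨hd.squarefree, y, hy.symm⟩
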